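/- arXiv:2109.00726 — 2 statements merged into one kernel-verified Lean document; each statement's English description precedes it below -/
import Mathlib

section
/- Let (R, m) be a Noetherian local ring and M a finitely generated R-module of Krull dimension t ≥ 2. Then f⁰_m(M) = e⁰_m(M): if P and Q are polynomials with rational coefficients of degrees t and t−1 respectively such that ℓ_R(M/m^{n+1}M) = P(n) and ℓ_R((m^{n+1}M :_M m)/m^{n+1}M) = Q(n) for all sufficiently large n, then (t−1)! times the leading coefficient of Q equals t! times the leading coefficient of P. -/
open IsLocalRing Submodule

/-- The colon submodule `(N :_M J) = {x ∈ M ∣ J x ⊆ N}`. -/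
def Submodule.colonBy {R M : Type*} [CommRing R] [AddCommGroup M] [Module R M]
    (N : Submodule R M) (J : Ideal R) : Submodule R M where
  carrier := {x | ∀ r ∈ J, r • x ∈ N}
  add_mem' := fun {a b} ha hb r hr => by
    rw [smul_add]; exact N.add_mem (ha r hr) (hb r hr)
  zero_mem' := fun r hr => by rw [smul_zero]; exact N.zero_mem
  smul_mem' := fun c {x} hx r hr => by
    rw [smul_comm]; exact N.smul_mem c (hx r hr)

/-- The length of a module: the height of `⊤` in its lattice of submodules. -/
noncomputable def moduleLength (R M : Type*) [Ring R] [AddCommGroup M] [Module R M] : ℕ∞ :=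
  Order.height (⊤ : Submodule R M)

theorem aux_len {R M : Type*} [CommRing R] [AddCommGroup M] [Module R M]
    (A B : Submodule R M) (h : A ≤ B) :
    Module.length R (M ⧸ A) =
      Module.length R ↥(Submodule.map A.mkQ B) + Module.length R (M ⧸ B) := by
  refine Module.length_eq_add_of_exact (Submodule.map A.mkQ B).subtype (Submodule.factor h)
    (Submodule.subtype_injective _) (Submodule.factor_surjective h) ?_
  rw [LinearMap.exact_iff, Submodule.range_subtype]
  ext x
  obtain ⟨x, rfl⟩ := A.mkQ_surjective x
  have hk : A.mkQ x ∈ LinearMap.ker (Submodule.factor h) ↔ x ∈ B :=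
    Submodule.Quotient.mk_eq_zero B
  rw [hk, Submodule.mem_map]
  constructor
  · intro hx
    exact ⟨x, hx, rfl⟩
  · rintro ⟨y, hy, hxy⟩
    rw [Submodule.mkQ_apply, Submodule.mkQ_apply, Submodule.Quotient.eq] at hxy
    have := B.sub_mem hy (h hxy)
    simpa using this

theorem aux_le {R M : Type*} [CommRing R] [AddCommGroup M] [Module R M]
    (D B C : Submodule R M) (h : D ≤ C) (hBC : B ⊓ C ≤ D) :
    Module.length R ↥(Submodule.map D.mkQ B) ≤ Module.length R (M ⧸ C) := by
  refine Module.length_le_of_injective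
    ((Submodule.factor h).comp (Submodule.map D.mkQ B).subtype) ?_
  rw [← LinearMap.ker_eq_bot, LinearMap.ker_eq_bot']
  rintro ⟨x, y, hy, rfl⟩ hx
  have hx : y ∈ C := (Submodule.Quotient.mk_eq_zero C).1 hx
  apply Subtype.ext
  simpa using hBC ⟨hy, hx⟩

theorem aux_colon {R M : Type*} [CommRing R] [IsNoetherianRing R]
    [AddCommGroup M] [Module R M] [Module.Finite R M] (I : Ideal R) :
    ∃ c : ℕ, ∀ k ≥ c, ∀ x ∈ (I ^ k • ⊤ : Submodule R M),
      (∀ r ∈ I, r • x ∈ (I ^ (k + 2) • ⊤ : Submodule R M)) →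
        x ∈ (I ^ (k + 1) • ⊤ : Submodule R M) := by
  have hs : ∀ k, I • (I ^ k • ⊤ : Submodule R M) = I ^ (k + 1) • ⊤ := fun k => by
    rw [pow_succ', Submodule.mul_smul]
  let F : I.Filtration M :=
    { N := fun k => (I ^ k • ⊤ : Submodule R M) ⊓ (I ^ (k + 2) • ⊤ : Submodule R M).colonBy I
      mono := fun k x hx => by
        refine ⟨(I.stableFiltration (⊤ : Submodule R M)).mono k hx.1, fun r hr => ?_⟩
        have := Submodule.smul_mem_smul hr hx.1
        rwa [hs] at this
      smul_le := fun k => by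
        rw [Submodule.smul_le]
        intro r hr x hx
        have h1 := hx.2 r hr
        refine ⟨(I.stableFiltration (⊤ : Submodule R M)).mono (k + 1) h1, fun s hs' => ?_⟩
        have := Submodule.smul_mem_smul hs' h1
        rwa [hs] at this }
  have hF : F.Stable := (I.stableFiltration_stable (⊤ : Submodule R M)).of_le
    (fun k => inf_le_left)
  obtain ⟨n₀, h⟩ := hF
  refine ⟨n₀ + 1, fun k hk x hx hx' => ?_⟩
  obtain ⟨j, rfl⟩ : ∃ j, k = j + 1 := ⟨k - 1, by omega⟩
  have hx2 : x ∈ F.N (j + 1) := ⟨hx, hx'⟩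
  rw [← h j (by omega)] at hx2
  have : I • F.N j ≤ (I ^ (j + 2) • ⊤ : Submodule R M) := by
    rw [Submodule.smul_le]
    intro r hr y hy
    exact hy.2 r hr
  exact this hx2

theorem aux_inf {R M : Type*} [CommRing R] [IsNoetherianRing R]
    [AddCommGroup M] [Module R M] [Module.Finite R M] (I : Ideal R) :
    ∃ c₀ : ℕ, ∀ c ≥ c₀, ∀ n ≥ c, (I ^ (n + 1) • ⊤ : Submodule R M).colonBy I ⊓
      (I ^ c • ⊤ : Submodule R M) ≤ (I ^ n • ⊤ : Submodule R M) := by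
  obtain ⟨c₀, h⟩ := aux_colon (M := M) I
  refine ⟨c₀, fun c hc n hn x hx => ?_⟩
  have key : ∀ k, c ≤ k → k ≤ n → x ∈ (I ^ k • ⊤ : Submodule R M) := by
    intro k hk
    induction k, hk using Nat.le_induction with
    | base => exact fun _ => hx.2
    | succ k hk ih =>
      intro hkn
      refine h k (by omega) x (ih (by omega)) fun r hr => ?_
      exact (I.stableFiltration (⊤ : Submodule R M)).antitone
        (show k + 2 ≤ n + 1 by omega) (hx.1 r hr)
  exact key n hn le_rfl

theorem aux_poly (S : Polynomial ℚ) (K : ℚ) (N : ℕ)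
    (h : ∀ n : ℕ, n ≥ N → |S.eval (n : ℚ)| ≤ K) : S.natDegree = 0 := by
  by_contra hne
  have hd : 0 < S.degree := Polynomial.natDegree_pos_iff_degree_pos.mp (Nat.pos_of_ne_zero hne)
  have h1 := (Polynomial.abs_tendsto_atTop S hd).comp
    (tendsto_natCast_atTop_atTop (R := ℚ))
  obtain ⟨n, hn1, hn2⟩ := ((h1.eventually_gt_atTop K).and
    (Filter.eventually_ge_atTop N)).exists
  exact absurd (h n hn2) (not_le.mpr hn1)

theorem aux_coeff (P : Polynomial ℚ) (s : ℕ) (h : P.natDegree = s + 1) :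
    (P - Polynomial.taylor (-1) P).coeff s = (s + 1 : ℚ) * P.leadingCoeff := by
  have hd : (Polynomial.hasseDeriv s P).natDegree ≤ 1 :=
    (Polynomial.natDegree_hasseDeriv_le P s).trans (by omega)
  rw [Polynomial.coeff_sub, Polynomial.taylor_coeff,
    Polynomial.eq_X_add_C_of_natDegree_le_one hd]
  simp only [Polynomial.hasseDeriv_coeff, Polynomial.leadingCoeff, h]
  simp [add_comm 1 s]

/-- For the maximal ideal: if `dim M = t ≥ 2` then `f⁰_𝔪(M) = e⁰_𝔪(M)`. -/
theorem statement6 {R M : Type*} [CommRing R] [IsNoetherianRing R] [IsLocalRing R]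
    [AddCommGroup M] [Module R M] [Module.Finite R M]
    (t : ℕ) (ht : 2 ≤ t)
    (hdim : ringKrullDim (R ⧸ Module.annihilator R M) = t)
    (P Q : Polynomial ℚ) (hPdeg : P.natDegree = t) (hQdeg : Q.natDegree = t - 1)
    (hP : ∃ N : ℕ, ∀ n ≥ N, ∃ len : ℕ,
      moduleLength R (M ⧸ ((maximalIdeal R) ^ (n + 1) • ⊤ : Submodule R M)) = len ∧
        (len : ℚ) = P.eval (n : ℚ))
    (hQ : ∃ N : ℕ, ∀ n ≥ N, ∃ len : ℕ,
      moduleLength R ↥(Submodule.map ((maximalIdeal R) ^ (n + 1) • ⊤ : Submodule R M).mkQ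
        (((maximalIdeal R) ^ (n + 1) • ⊤ : Submodule R M).colonBy (maximalIdeal R))) = len ∧
        (len : ℚ) = Q.eval (n : ℚ)) :
    ((t - 1).factorial : ℚ) * Q.leadingCoeff = (t.factorial : ℚ) * P.leadingCoeff := by
  obtain ⟨s, rfl⟩ : ∃ s, t = s + 1 := ⟨t - 1, by omega⟩
  rw [Nat.add_sub_cancel] at hQdeg ⊢
  obtain ⟨N₁, hP⟩ := hP
  obtain ⟨N₂, hQ⟩ := hQ
  obtain ⟨c₀, hc₀⟩ := aux_inf (M := M) (maximalIdeal R)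
  simp only [moduleLength, ← Module.length_eq_height] at hP hQ
  set I := maximalIdeal R with hI
  obtain ⟨K, hK, -⟩ := hP (c₀ + N₁) (by omega)
  have hS : (Q - (P - Polynomial.taylor (-1) P)).natDegree = 0 := by
    refine aux_poly _ K (c₀ + N₁ + N₂ + 1) fun n hn => ?_
    obtain ⟨m, rfl⟩ : ∃ m, n = m + 1 := ⟨n - 1, by omega⟩
    obtain ⟨p, hp, hp'⟩ := hP (m + 1) (by omega)
    obtain ⟨p₁, hp₁, hp₁'⟩ := hP m (by omega)
    obtain ⟨q, hq, hq'⟩ := hQ (m + 1) (by omega)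
    set A := (I ^ (m + 1 + 1) • ⊤ : Submodule R M) with hA
    set D := (I ^ (m + 1) • ⊤ : Submodule R M) with hD
    have hDB : D ≤ A.colonBy I := fun x hx r hr => by
      have := Submodule.smul_mem_smul hr hx
      rwa [hD, ← Submodule.mul_smul, ← pow_succ'] at this
    have hAD : A ≤ D := (I.stableFiltration (⊤ : Submodule R M)).mono (m + 1)
    have e1 := aux_len A (A.colonBy I) (hAD.trans hDB)
    have e2 := aux_len D (A.colonBy I) hDB
    have e3 := aux_le D (A.colonBy I) (I ^ (c₀ + N₁ + 1) • ⊤)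
      ((I.stableFiltration (⊤ : Submodule R M)).antitone (by omega))
      (hc₀ _ (by omega) _ (by omega))
    rw [hK] at e3
    rw [hp, hq] at e1
    rw [hp₁] at e2
    generalize Module.length R (M ⧸ A.colonBy I) = b at e1 e2
    generalize Module.length R ↥(Submodule.map D.mkQ (A.colonBy I)) = d at e2 e3
    lift d to ℕ using ne_top_of_le_ne_top (ENat.coe_ne_top K) e3
    have hb : b ≠ ⊤ := by
      rintro rfl
      simp at e2
    lift b to ℕ using hb
    norm_cast at e1 e2 e3
    have e1' : (p : ℚ) = q + b := by exact_mod_cast e1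
    have e2' : (p₁ : ℚ) = d + b := by exact_mod_cast e2
    have e3' : (d : ℚ) ≤ K := by exact_mod_cast e3
    have hd0 : (0 : ℚ) ≤ d := Nat.cast_nonneg d
    have hev : (Q - (P - Polynomial.taylor (-1) P)).eval ((m + 1 : ℕ) : ℚ) = d := by
      rw [Polynomial.eval_sub, Polynomial.eval_sub, Polynomial.taylor_eval, ← hq', ← hp']
      have : (((m + 1 : ℕ) : ℚ) + -1) = m := by push_cast; ring
      rw [this, ← hp₁']
      linarith
    rw [hev, abs_of_nonneg hd0]
    exact e3'
  have h0 : (Q - (P - Polynomial.taylor (-1) P)).coeff s = 0 :=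
    Polynomial.coeff_eq_zero_of_natDegree_lt (by omega)
  rw [Polynomial.coeff_sub, aux_coeff P s hPdeg, ← hQdeg, Polynomial.coeff_natDegree, hQdeg] at h0
  have : Q.leadingCoeff = (s + 1 : ℚ) * P.leadingCoeff := by linarith
  rw [this, Nat.factorial_succ]
  push_cast
  ring
end

section
/- Let (R, m) be a Noetherian local ring with infinite residue field and let M be an Ulrich R-module of Krull dimension t ≥ 2 (i.e., M is Cohen–Macaulay and the minimal number of generators of M equals the Hilbert multiplicity e⁰_m(M)). Then there exists a parameter ideal Q of M with m M = Q M, and for such Q the irreducible multiplicity satisfies f⁰_Q(M) = ℓ_R(M/QM); that is, if c denotes the eventual leading-coefficient data of the polynomial of degree t−1 equal to ℓ_R((Q^{n+1}M :_M m)/Q^{n+1}M) for n ≫ 0, then (t−1)! times that leading coefficient equals ℓ_R(M/QM). -/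
open IsLocalRing Submodule

/-- The minimal number of generators of a module. -/
noncomputable def muGen (R M : Type*) [Ring R] [AddCommGroup M] [Module R M] : ℕ :=
  sInf {n | ∃ s : Finset M, s.card = n ∧ Submodule.span R (s : Set M) = ⊤}

/-- The depth of a module over a local ring: the supremum of lengths of `M`-regular
sequences consisting of elements of the maximal ideal. -/
noncomputable def depthM (R M : Type*) [CommRing R] [IsLocalRing R]
    [AddCommGroup M] [Module R M] : ℕ :=
  sSup {n | ∃ rs : List R, rs.length = n ∧ (∀ r ∈ rs, r ∈ maximalIdeal R) ∧
    RingTheory.Sequence.IsRegular M rs}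

/-- `Q` is a parameter ideal of `M` (of dimension `t`): it is generated by `t` elements of
the maximal ideal and `M/QM` has finite length. -/
def IsParameterIdeal (R M : Type*) [CommRing R] [IsLocalRing R]
    [AddCommGroup M] [Module R M] (t : ℕ) (Q : Ideal R) : Prop :=
  Q ≤ maximalIdeal R ∧ ∃ s : Finset R, s.card = t ∧ Q = Ideal.span (s : Set R) ∧
    moduleLength R (M ⧸ (Q • ⊤ : Submodule R M)) ≠ ⊤


theorem ulr_abstract {S G : Type*} [CommRing S] [IsNoetherianRing S] [AddCommGroup G] [Module S G]
    [Module.Finite S G] (J : Ideal S) :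
    ∃ F : Set (Ideal S), F.Finite ∧ (∀ p ∈ F, ¬ J ≤ p) ∧ ∃ c : ℕ, ∀ s : S, (∀ p ∈ F, s ∉ p) →
      ∀ u ∈ (J ^ c • ⊤ : Submodule S G), s • u = 0 → u = 0 := by
  let H : ℕ →o Submodule S G :=
    ⟨fun k => (⊥ : Submodule S G).colonBy (J ^ k), fun a b hab u hu r hr =>
      hu r (Ideal.pow_le_pow_right hab hr)⟩
  obtain ⟨k, hk⟩ := monotone_stabilizes_iff_noetherian.mpr (inferInstance : IsNoetherian S G) H
  refine ⟨associatedPrimes S (G ⧸ H k), associatedPrimes.finite S _, ?_, ?_⟩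
  · intro p hp hJ
    obtain ⟨hpp, x, hx⟩ := isAssociatedPrime_iff.mp hp
    obtain ⟨u, rfl⟩ := Submodule.Quotient.mk_surjective _ x
    apply hpp.ne_top
    have hu : u ∈ H k := by
      rw [hk (k + 1) (by omega)]
      intro r hr
      rw [pow_succ] at hr
      refine Submodule.mul_induction_on hr ?_ ?_
      · intro a ha b hb
        have hb' := hJ hb
        rw [hx, Submodule.mem_colon_singleton] at hb'
        rw [Submodule.mem_bot, ← Submodule.Quotient.mk_smul, Submodule.Quotient.mk_eq_zero] at hb'
        have := hb' a ha
        rwa [mul_smul]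
      · intro a b ha hb
        rw [add_smul]; exact add_mem ha hb
    rw [hx, (Submodule.Quotient.mk_eq_zero _).mpr hu]
    ext; simp
  · obtain ⟨k', hk'⟩ := Ideal.exists_pow_inf_eq_pow_smul J (H k)
    refine ⟨k' + k, fun s hs u hu hsu => ?_⟩
    have hreg : IsSMulRegular (G ⧸ H k) s := by
      by_contra h
      have : s ∈ (⋃ p ∈ associatedPrimes S (G ⧸ H k), (p : Set S)) := by
        rw [biUnion_associatedPrimes_eq_compl_regular]; exact h
      simp only [Set.mem_iUnion] at this
      obtain ⟨p, hp, h⟩ := this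
      exact hs p hp h
    have huH : u ∈ H k := by
      rw [← Submodule.Quotient.mk_eq_zero]
      apply hreg
      simp only [smul_zero]
      rw [← Submodule.Quotient.mk_smul, hsu, Submodule.Quotient.mk_zero]
    have h1 : u ∈ J ^ (k' + k) • (⊤ : Submodule S G) ⊓ H k := ⟨hu, huH⟩
    rw [hk' _ (by omega), Nat.add_sub_cancel_left] at h1
    have h2 : J ^ k • (J ^ k' • (⊤ : Submodule S G) ⊓ H k) ≤ ⊥ := by
      rw [Submodule.smul_le]
      intro r hr v hv
      exact hv.2 r hr
    exact (Submodule.mem_bot S).mp (h2 h1)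

theorem ulr_abstract' {S E : Type*} [CommRing S] [IsNoetherianRing S] [AddCommGroup E] [Module S E]
    (A B : Submodule S E) (hA : A.FG) (J : Ideal S) :
    ∃ F : Set (Ideal S), F.Finite ∧ (∀ p ∈ F, ¬ J ≤ p) ∧ ∃ c : ℕ, ∀ s : S, (∀ p ∈ F, s ∉ p) →
      ∀ u ∈ J ^ c • A, s • u ∈ B → u ∈ B := by
  have : Module.Finite S A := Module.Finite.iff_fg.mpr hA
  let K := B.comap A.subtype
  obtain ⟨F, hF, hJ, c, hc⟩ := ulr_abstract (G := A ⧸ K) J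
  refine ⟨F, hF, hJ, c, fun s hs u hu hsu => ?_⟩
  have h1 : (J ^ c • (⊤ : Submodule S A)).map A.subtype = J ^ c • A := by
    rw [Submodule.map_smul'', Submodule.map_top, Submodule.range_subtype]
  rw [← h1] at hu
  obtain ⟨v, hv, rfl⟩ := hu
  have h2 : (J ^ c • (⊤ : Submodule S A)).map K.mkQ = J ^ c • ⊤ := by
    rw [Submodule.map_smul'', Submodule.map_top, Submodule.range_mkQ]
  have h3 := hc s hs (K.mkQ v) (h2 ▸ Submodule.mem_map_of_mem hv) (by
    rw [← map_smul, Submodule.mkQ_apply, Submodule.Quotient.mk_eq_zero]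
    exact hsu)
  rw [Submodule.mkQ_apply, Submodule.Quotient.mk_eq_zero] at h3
  exact h3

theorem ulr_infinite {R E : Type*} [CommRing R] [IsLocalRing R] [Infinite (ResidueField R)]
    [AddCommGroup E] [Module R E] [Nontrivial E] : Infinite E := by
  obtain ⟨v, hv⟩ := exists_ne (0 : E)
  by_contra hfin
  rw [not_infinite_iff_finite] at hfin
  let f : R →ₗ[R] E := LinearMap.toSpanSingleton R E v
  have hker : LinearMap.ker f ≤ maximalIdeal R := by
    apply IsLocalRing.le_maximalIdeal
    intro h
    apply hv
    have : (1 : R) ∈ LinearMap.ker f := by rw [h]; trivial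
    simpa [f] using this
  have : Finite (R ⧸ LinearMap.ker f) :=
    Finite.of_injective _ f.quotKerEquivRange.injective
  have : Finite (R ⧸ maximalIdeal R) :=
    Finite.of_surjective _ (Ideal.Quotient.factor_surjective hker)
  have h3 : Finite (ResidueField R) := this
  exact not_finite (ResidueField R)

theorem ulr_avoid {R E : Type*} [CommRing R] [IsLocalRing R] [Infinite (ResidueField R)]
    [AddCommGroup E] [Module R E] {ι : Type*} (F : Set ι) (hF : F.Finite) (W : ι → Submodule R E)
    (hW : ∀ i ∈ F, W i ≠ ⊤) : ∃ x : E, ∀ i ∈ F, x ∉ W i := by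
  classical
  by_contra! h
  have hc : ⋃ p ∈ hF.toFinset.image W, (p : Set E) = Set.univ := by
    ext x
    simp only [Set.mem_univ, iff_true, Set.mem_iUnion]
    obtain ⟨i, hi, hx⟩ := h x
    exact ⟨W i, Finset.mem_image_of_mem _ (by simpa using hi), hx⟩
  obtain ⟨p, hp, hfi⟩ := Submodule.exists_finiteIndex_of_cover hc
  have : Finite (E ⧸ p) := AddSubgroup.finite_quotient_of_finiteIndex
  obtain ⟨i, hi, rfl⟩ := Finset.mem_image.mp hp
  have : Nontrivial (E ⧸ W i) := Submodule.Quotient.nontrivial_iff.mpr (hW i (by simpa using hi))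
  have : Infinite (E ⧸ W i) := ulr_infinite (R := R)
  exact not_finite (E ⧸ W i)

theorem ulr_superficial0 {R L : Type*} [CommRing R] [IsNoetherianRing R] [IsLocalRing R]
    [AddCommGroup L] [Module R L] [Module.Finite R L] [Infinite (ResidueField R)] :
    ∃ x ∈ maximalIdeal R, ∃ c : ℕ, ∀ n ≥ c, ∀ u ∈ (maximalIdeal R ^ n • ⊤ : Submodule R L),
      x • u ∈ (maximalIdeal R ^ (n + 2) • ⊤ : Submodule R L) →
      u ∈ (maximalIdeal R ^ (n + 1) • ⊤ : Submodule R L) := by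
  set m := maximalIdeal R with hm
  let F := m.stableFiltration (⊤ : Submodule R L)
  let F' := m.stableFiltration (m • ⊤ : Submodule R L)
  have hFN : ∀ n, F.N n = m ^ n • ⊤ := fun n => rfl
  have hFN' : ∀ n, F'.N n = m ^ (n + 1) • ⊤ := fun n => by
    change m ^ n • (m • ⊤) = _
    rw [smul_smul, pow_succ]
  have hfg : F.submodule.FG :=
    (Ideal.Filtration.submodule_fg_iff_stable F (fun i => IsNoetherian.noetherian _)).mpr
      (Ideal.stableFiltration_stable _ _)
  let mon : m →ₗ[R] reesAlgebra m :=
    { toFun := fun x => ⟨Polynomial.monomial 1 (x : R),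
        reesAlgebra.monomial_mem.mpr (by rw [pow_one]; exact x.2)⟩
      map_add' := fun x y => by ext1; simp
      map_smul' := fun r x => by ext1; simp [Polynomial.smul_monomial] }
  let J : Ideal (reesAlgebra m) := Ideal.span (Set.range mon)
  obtain ⟨Fs, hFs, hJ, c, hc⟩ := ulr_abstract' F.submodule F'.submodule hfg J
  obtain ⟨x, hx⟩ := ulr_avoid (E := m) Fs hFs (fun p => (p.restrictScalars R).comap mon) (by
    intro p hp h
    apply hJ p hp
    rw [Ideal.span_le]
    rintro _ ⟨y, rfl⟩
    have : y ∈ (p.restrictScalars R).comap mon := by rw [h]; trivial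
    exact this)
  have hsingle : ∀ n, ∀ u ∈ (m ^ n • ⊤ : Submodule R L),
      PolynomialModule.single R n u ∈ F.submodule := by
    intro n u hu i
    rw [PolynomialModule.coeff_single, Finsupp.single_apply]
    split_ifs with h
    · subst h; exact hu
    · exact zero_mem _
  have hmon : ∀ (y : m) (n : ℕ) (u : L), mon y • PolynomialModule.single R n u
      = PolynomialModule.single R (n + 1) ((y : R) • u) := by
    intro y n u
    rw [Subalgebra.smul_def]
    change Polynomial.monomial 1 (y : R) • _ = _
    rw [PolynomialModule.monomial_smul_single, add_comm]
  have hpow : ∀ n, ∀ u ∈ (m ^ n • ⊤ : Submodule R L),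
      PolynomialModule.single R n u ∈ J ^ n • F.submodule := by
    intro n
    induction n with
    | zero =>
      intro u hu
      rw [pow_zero, one_smul]
      exact hsingle 0 u hu
    | succ n ih =>
      intro u hu
      rw [pow_succ', ← smul_smul] at hu
      refine Submodule.smul_induction_on hu ?_ ?_
      · intro r hr v hv
        have h1 := ih v hv
        rw [pow_succ', ← smul_smul, ← hmon ⟨r, hr⟩ n v]
        exact Submodule.smul_mem_smul
          (show mon ⟨r, hr⟩ ∈ J from Ideal.subset_span ⟨_, rfl⟩) h1
      · intro a b ha hb
        rw [PolynomialModule.single_add]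
        exact add_mem ha hb
  refine ⟨x, x.2, c, fun n hn u hu hxu => ?_⟩
  have hz := hc (mon x) (fun p hp h => hx p hp h) (PolynomialModule.single R n u)
    (Submodule.smul_mono_left (Ideal.pow_le_pow_right hn) (hpow n u hu)) (by
      intro i
      rw [hmon, PolynomialModule.coeff_single, Finsupp.single_apply]
      split_ifs with h
      · subst h; rw [hFN']; exact hxu
      · exact zero_mem _)
  have := hz n
  rw [PolynomialModule.coeff_single, Finsupp.single_apply, if_pos rfl, hFN'] at this
  exact this

theorem ulr_superficial1 {R L : Type*} [CommRing R] [IsNoetherianRing R] [IsLocalRing R]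
    [AddCommGroup L] [Module R L] [Module.Finite R L] [Infinite (ResidueField R)]
    (hsoc : ∀ u : L, (∀ r ∈ maximalIdeal R, r • u = 0) → u = 0) :
    ∃ x ∈ maximalIdeal R, (∀ u : L, x • u = 0 → u = 0) ∧ ∃ c : ℕ, ∀ n ≥ c, ∀ u : L,
      x • u ∈ (maximalIdeal R ^ (n + 1) • ⊤ : Submodule R L) →
      u ∈ (maximalIdeal R ^ n • ⊤ : Submodule R L) := by
  obtain ⟨x, hx, c, hc⟩ := ulr_superficial0 (R := R) (L := L)
  set m := maximalIdeal R with hm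
  have anti : ∀ {a b : ℕ}, a ≤ b → (m ^ b • ⊤ : Submodule R L) ≤ m ^ a • ⊤ := fun h =>
    Submodule.smul_mono_left (Ideal.pow_le_pow_right h)
  have c1 : ∀ d, ∀ u ∈ (m ^ c • ⊤ : Submodule R L),
      x • u ∈ (m ^ (c + d + 1) • ⊤ : Submodule R L) → u ∈ (m ^ (c + d) • ⊤ : Submodule R L) := by
    intro d
    induction d with
    | zero => intro u hu _; exact hu
    | succ d ih =>
      intro u hu hxu
      exact hc (c + d) (by omega) u (ih u hu (anti (by omega) hxu)) hxu
  have c2 : ∀ u ∈ (m ^ c • ⊤ : Submodule R L), x • u = 0 → u = 0 := by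
    intro u hu hxu
    have : u ∈ (⨅ i : ℕ, m ^ i • ⊤ : Submodule R L) := by
      rw [Submodule.mem_iInf]
      intro i
      exact anti (by omega : i ≤ c + i) (c1 i u hu (by rw [hxu]; exact zero_mem _))
    rw [Ideal.iInf_pow_smul_eq_bot_of_isLocalRing _ (Ideal.IsPrime.ne_top')] at this
    exact (Submodule.mem_bot R).mp this
  have c3 : ∀ j ≤ c, ∀ u ∈ (m ^ (c - j) • ⊤ : Submodule R L), x • u = 0 → u = 0 := by
    intro j
    induction j with
    | zero => intro _ u hu; exact c2 u hu
    | succ j ih =>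
      intro hj u hu hxu
      apply hsoc
      intro r hr
      apply ih (by omega)
      · rw [show c - j = (c - (j + 1)) + 1 by omega, pow_succ', ← smul_smul]
        exact Submodule.smul_mem_smul hr hu
      · rw [smul_comm, hxu, smul_zero]
  have c4 : ∀ u : L, x • u = 0 → u = 0 := fun u hu => c3 c le_rfl u (by simp) hu
  refine ⟨x, hx, c4, ?_⟩
  let f : L →ₗ[R] L := LinearMap.lsmul R L x
  obtain ⟨k, hk⟩ := Ideal.exists_pow_inf_eq_pow_smul m (LinearMap.range f)
  refine ⟨k + c, fun n hn u hu => ?_⟩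
  have h1 : x • u ∈ m ^ (n + 1) • ⊤ ⊓ LinearMap.range f := ⟨hu, ⟨u, rfl⟩⟩
  rw [hk _ (by omega)] at h1
  have h2 : m ^ (n + 1 - k) • (m ^ k • ⊤ ⊓ LinearMap.range f) ≤
      (m ^ (n + 1 - k) • (⊤ : Submodule R L)).map f := by
    rw [Submodule.map_smul'', Submodule.map_top]
    exact smul_mono_right _ inf_le_right
  obtain ⟨w, hw, hwu⟩ := h2 h1
  have : u = w := by
    have := c4 (u - w) (by
      rw [smul_sub, sub_eq_zero]; exact hwu.symm)
    exact sub_eq_zero.mp this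
  subst this
  have h3 := c1 (n - c) u (anti (by omega) hw)
  rw [show c + (n - c) = n by omega] at h3
  exact h3 hu

section
variable {R M : Type*} [CommRing R] [AddCommGroup M] [Module R M]

theorem ulr_mem_mkQ (N : Submodule R M) (I : Ideal R) (u : M) :
    N.mkQ u ∈ (I • ⊤ : Submodule R (M ⧸ N)) ↔ u ∈ I • (⊤ : Submodule R M) ⊔ N := by
  have : (I • ⊤ : Submodule R (M ⧸ N)) = (I • (⊤ : Submodule R M)).map N.mkQ := by
    rw [Submodule.map_smul'', Submodule.map_top, Submodule.range_mkQ]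
  rw [this, ← Submodule.mem_comap, Submodule.comap_map_mkQ, sup_comm]

theorem ulr_superficial2 [IsNoetherianRing R] [IsLocalRing R]
    [Module.Finite R M] [Infinite (ResidueField R)] (N : Submodule R M)
    (hsoc : ∀ u : M, (∀ r ∈ maximalIdeal R, r • u ∈ N) → u ∈ N) :
    ∃ x ∈ maximalIdeal R, (∀ u : M, x • u ∈ N → u ∈ N) ∧ ∃ c : ℕ, ∀ n ≥ c, ∀ u : M,
      x • u ∈ (maximalIdeal R ^ (n + 1) • ⊤ : Submodule R M) ⊔ N →
      u ∈ (maximalIdeal R ^ n • ⊤ : Submodule R M) ⊔ N := by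
  obtain ⟨x, hx, h1, c, hc⟩ := ulr_superficial1 (R := R) (L := M ⧸ N) (by
    intro u hu
    obtain ⟨u, rfl⟩ := Submodule.Quotient.mk_surjective _ u
    rw [Submodule.Quotient.mk_eq_zero]
    apply hsoc
    intro r hr
    have := hu r hr
    rwa [← Submodule.Quotient.mk_smul, Submodule.Quotient.mk_eq_zero] at this)
  refine ⟨x, hx, ?_, c, ?_⟩
  · intro u hu
    have := h1 (Submodule.Quotient.mk u) (by
      rwa [← Submodule.Quotient.mk_smul, Submodule.Quotient.mk_eq_zero])
    rwa [Submodule.Quotient.mk_eq_zero] at this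
  · intro n hn u hu
    rw [← ulr_mem_mkQ] at hu ⊢
    exact hc n hn _ (by rwa [map_smul] at hu)

theorem ulr_common [IsNoetherianRing R] [IsLocalRing R]
    [Module.Finite R M] [Infinite (ResidueField R)] (N N' : Submodule R M)
    (hsoc : ∀ u : M, (∀ r ∈ maximalIdeal R, r • u ∈ N) → u ∈ N)
    (hsoc' : ∀ u : M, (∀ r ∈ maximalIdeal R, r • u ∈ N') → u ∈ N') :
    ∃ x ∈ maximalIdeal R, (∀ u : M, x • u ∈ N → u ∈ N) ∧ (∀ u : M, x • u ∈ N' → u ∈ N') := by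
  obtain ⟨x, hx, h1, -⟩ := ulr_superficial2 (M := M × M) (N.prod N') (by
    rintro ⟨u, v⟩ h
    exact ⟨hsoc u fun r hr => (h r hr).1, hsoc' v fun r hr => (h r hr).2⟩)
  refine ⟨x, hx, fun u hu => ?_, fun u hu => ?_⟩
  · exact (h1 (u, 0) ⟨hu, by simp⟩).1
  · exact (h1 (0, u) ⟨by simp, hu⟩).2

/-- `N + yM`. -/
def ulrAdd (N : Submodule R M) (y : R) : Submodule R M := N ⊔ Ideal.span {y} • ⊤

theorem ulr_mem_add {N : Submodule R M} {y : R} {u : M} :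
    u ∈ ulrAdd N y ↔ ∃ w, u - y • w ∈ N := by
  unfold ulrAdd
  rw [Submodule.mem_sup]
  constructor
  · rintro ⟨a, ha, b, hb, rfl⟩
    rw [Submodule.ideal_span_singleton_smul, Submodule.mem_smul_pointwise_iff_exists] at hb
    obtain ⟨w, -, rfl⟩ := hb
    exact ⟨w, by simpa using ha⟩
  · rintro ⟨w, hw⟩
    exact ⟨_, hw, y • w, Submodule.smul_mem_smul (Ideal.mem_span_singleton_self y) trivial, by simp⟩

theorem ulr_add_comm (N : Submodule R M) (y z : R) :
    ulrAdd (ulrAdd N y) z = ulrAdd (ulrAdd N z) y := by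
  unfold ulrAdd; rw [sup_assoc, sup_assoc, sup_comm (Ideal.span {y} • ⊤)]

theorem ulr_le_add (N : Submodule R M) (y : R) : N ≤ ulrAdd N y := le_sup_left

/-- regularity of an element on `M/N`. -/
def ulrReg (N : Submodule R M) (y : R) : Prop := ∀ u : M, y • u ∈ N → u ∈ N

/-- `M/N` has a regular sequence of length `t`. -/
def ulrD [IsLocalRing R] : ℕ → Submodule R M → Prop
  | 0, N => N ≠ ⊤
  | t + 1, N => ∃ y ∈ maximalIdeal R, ulrReg N y ∧ ulrD t (ulrAdd N y)

theorem ulr_D_ne_top [IsLocalRing R] {t : ℕ} : ∀ {N : Submodule R M}, ulrD t N → N ≠ ⊤ := by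
  induction t with
  | zero => intro N h; exact h
  | succ t ih =>
    rintro N ⟨y, -, -, h⟩ rfl
    exact ih h (top_le_iff.mp (ulr_le_add _ _))

theorem ulr_D_soc [IsLocalRing R] {t : ℕ} {N : Submodule R M} (h : ulrD (t + 1) N) (u : M)
    (hu : ∀ r ∈ maximalIdeal R, r • u ∈ N) : u ∈ N := by
  obtain ⟨y, hy, hr, -⟩ := h
  exact hr u (hu y hy)

theorem ulr_swap [IsLocalRing R] [IsNoetherianRing R] [Module.Finite R M]
    {N : Submodule R M} {y z : R} (hy : y ∈ maximalIdeal R)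
    (h1 : ulrReg N y) (h2 : ulrReg (ulrAdd N y) z) : ulrReg N z ∧ ulrReg (ulrAdd N z) y := by
  constructor
  · let K : Submodule R M := N.comap (LinearMap.lsmul R M z)
    have hK : K ≤ N := by
      apply Submodule.le_of_le_smul_of_le_jacobson_bot (IsNoetherian.noetherian K)
        (IsLocalRing.maximalIdeal_le_jacobson ⊥)
      intro u hu
      have hu' : z • u ∈ N := hu
      obtain ⟨w, hw⟩ := ulr_mem_add.mp (h2 u (ulr_le_add _ _ hu'))
      have hzw : z • w ∈ N := by
        apply h1
        have : y • z • w = z • u - z • (u - y • w) := by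
          rw [smul_sub, smul_comm]; abel
        rw [this]
        exact sub_mem hu' (N.smul_mem _ hw)
      have : u = (u - y • w) + y • w := by abel
      rw [this]
      exact add_mem (Submodule.mem_sup_left hw)
        (Submodule.mem_sup_right (Submodule.smul_mem_smul hy hzw))
    intro u hu
    exact hK hu
  · intro u hu
    obtain ⟨v, hv⟩ := ulr_mem_add.mp hu
    have h3 : z • v ∈ ulrAdd N y := ulr_mem_add.mpr ⟨u, by
      rw [← neg_sub]; exact neg_mem hv⟩
    obtain ⟨w, hw⟩ := ulr_mem_add.mp (h2 v h3)
    refine ulr_mem_add.mpr ⟨w, h1 _ ?_⟩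
    have : y • (u - z • w) = (y • u - z • v) + z • (v - y • w) := by
      rw [smul_sub, smul_sub, smul_comm z y]; abel
    rw [this]
    exact add_mem hv (N.smul_mem _ hw)

theorem ulr_soc_exchange [IsLocalRing R] {N : Submodule R M} {x y : R}
    (hym : y ∈ maximalIdeal R) (hx : ulrReg N x) (hy : ulrReg N y)
    (hsoc : ∀ u : M, (∀ r ∈ maximalIdeal R, r • u ∈ ulrAdd N y) → u ∈ ulrAdd N y) :
    ∀ u : M, (∀ r ∈ maximalIdeal R, r • u ∈ ulrAdd N x) → u ∈ ulrAdd N x := by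
  intro u hu
  obtain ⟨v, hv⟩ := ulr_mem_add.mp (hu y hym)
  have h1 : v ∈ ulrAdd N y := by
    apply hsoc
    intro r hr
    obtain ⟨w, hw⟩ := ulr_mem_add.mp (hu r hr)
    refine ulr_mem_add.mpr ⟨w, hx _ ?_⟩
    have : x • (r • v - y • w) = y • (r • u - x • w) - r • (y • u - x • v) := by
      simp only [smul_sub, smul_smul, mul_comm]; abel
    rw [this]
    exact sub_mem (N.smul_mem _ hw) (N.smul_mem _ hv)
  obtain ⟨w, hw⟩ := ulr_mem_add.mp h1
  refine ulr_mem_add.mpr ⟨w, hy _ ?_⟩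
  have : y • (u - x • w) = (y • u - x • v) + x • (v - y • w) := by
    simp only [smul_sub, smul_smul, mul_comm]; abel
  rw [this]
  exact add_mem hv (N.smul_mem _ hw)

theorem ulr_exchange [IsNoetherianRing R] [IsLocalRing R]
    [Module.Finite R M] [Infinite (ResidueField R)] (t : ℕ) :
    ∀ (N : Submodule R M), ulrD (t + 1) N → ∀ x ∈ maximalIdeal R, ulrReg N x →
      ulrD t (ulrAdd N x) := by
  induction t with
  | zero =>
    intro N hN x hx _ htop
    apply ulr_D_ne_top hN
    rw [eq_top_iff]
    apply Submodule.le_of_le_smul_of_le_jacobson_bot (IsNoetherian.noetherian _)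
        (IsLocalRing.maximalIdeal_le_jacobson ⊥)
    rw [← htop]
    apply sup_le_sup_left
    exact Submodule.smul_mono ((Ideal.span_singleton_le_iff_mem _).mpr hx) (htop ▸ le_rfl)
  | succ t ih =>
    rintro N ⟨y, hym, hy, hD⟩ x hxm hx
    have hsy := ulr_D_soc hD
    have hsx := ulr_soc_exchange hym hx hy hsy
    obtain ⟨z, hzm, hzy, hzx⟩ := ulr_common _ _ hsy hsx
    have s1 := ulr_swap hym hy hzy
    have s2 := ulr_swap hxm hx hzx
    have d1 : ulrD (t + 1) (ulrAdd N z) :=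
      ⟨y, hym, s1.2, ulr_add_comm N y z ▸ ih _ hD z hzm hzy⟩
    exact ⟨z, hzm, hzx, ulr_add_comm N z x ▸ ih _ d1 x hxm s2.2⟩

theorem ulr_D_of_regular [IsLocalRing R] (rs : List R) (hm : ∀ r ∈ rs, r ∈ maximalIdeal R)
    (h : RingTheory.Sequence.IsRegular M rs) : ulrD rs.length (⊥ : Submodule R M) := by
  have key : ∀ k i, i + k = rs.length → ulrD k (Ideal.ofList (rs.take i) • ⊤ : Submodule R M) := by
    intro k
    induction k with
    | zero =>
      intro i hi
      have : rs.take i = rs := List.take_of_length_le (by omega)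
      rw [this]
      exact h.top_ne_smul.symm
    | succ k ih =>
      intro i hi
      have hlt : i < rs.length := by omega
      refine ⟨rs[i], hm _ (List.getElem_mem _), ?_, ?_⟩
      · intro u hu
        have := h.regular_mod_prev i hlt
        rw [← Submodule.Quotient.mk_eq_zero] at hu ⊢
        apply this
        simp only [smul_zero]
        rw [← Submodule.Quotient.mk_smul]; exact hu
      · have := ih (i + 1) (by omega)
        rw [List.take_add_one, List.getElem?_eq_getElem hlt] at this
        simp only [Option.toList_some, Ideal.ofList_append, Ideal.ofList_singleton,
          Submodule.sup_smul] at this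
        exact this
  have := key rs.length 0 (by omega)
  simpa using this
end

section
variable {R M : Type*} [CommRing R] [AddCommGroup M] [Module R M]

theorem ulr_len (R M : Type*) [Ring R] [AddCommGroup M] [Module R M] :
    moduleLength R M = Module.length R M := (Module.length_eq_height R M).symm

theorem ulr_len_le (A B : Submodule R M) (h : A ≤ B) :
    Module.length R (M ⧸ A) = Module.length R (B.map A.mkQ) + Module.length R (M ⧸ B) := by
  refine Module.length_eq_add_of_exact (B.map A.mkQ).subtype (Submodule.factor h)
    (Submodule.injective_subtype _) (Submodule.factor_surjective h) ?_
  intro v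
  obtain ⟨v, rfl⟩ := Submodule.Quotient.mk_surjective _ v
  rw [← Submodule.mkQ_apply, Submodule.factor_mk]
  rw [Submodule.mkQ_apply, Submodule.Quotient.mk_eq_zero]
  constructor
  · intro hv
    exact ⟨⟨A.mkQ v, v, hv, rfl⟩, rfl⟩
  · rintro ⟨⟨_, w, hw, rfl⟩, hwv⟩
    have h1 : A.mkQ w = A.mkQ v := hwv
    rw [← sub_eq_zero, ← map_sub, Submodule.mkQ_apply, Submodule.Quotient.mk_eq_zero] at h1
    have := B.sub_mem hw (h h1)
    simpa using this

theorem ulr_len_eq (A B : Submodule R M) (h : A ≤ B) (n : ℕ)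
    (hA : Module.length R (M ⧸ A) = n) (hB : Module.length R (M ⧸ B) = n) : A = B := by
  have h1 := ulr_len_le A B h
  rw [hA, hB] at h1
  have h2 : Module.length R (B.map A.mkQ) = 0 := by
    have : (0 : ℕ∞) + n = Module.length R (B.map A.mkQ) + n := by rw [zero_add]; exact h1
    exact (ENat.add_left_injective_of_ne_top (ENat.natCast_ne_top n) this).symm
  rw [Module.length_eq_zero_iff, Submodule.subsingleton_iff_eq_bot] at h2
  refine le_antisymm h fun b hb => ?_
  have h3 : A.mkQ b ∈ B.map A.mkQ := Submodule.mem_map_of_mem hb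
  rw [h2, Submodule.mem_bot, Submodule.mkQ_apply, Submodule.Quotient.mk_eq_zero] at h3
  exact h3

theorem ulr_len_reg (A B : Submodule R M) (x : R) (h : ∀ u, x • u ∈ B ↔ u ∈ A) :
    Module.length R (M ⧸ B) = Module.length R (M ⧸ A) + Module.length R (M ⧸ ulrAdd B x) := by
  have hle : A ≤ B.comap (LinearMap.lsmul R M x) := fun u hu => (h u).mpr hu
  refine Module.length_eq_add_of_exact (A.mapQ B (LinearMap.lsmul R M x) hle)
    (Submodule.factor (ulr_le_add B x)) ?_ (Submodule.factor_surjective _) ?_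
  · rw [injective_iff_map_eq_zero]
    intro v hv
    obtain ⟨v, rfl⟩ := Submodule.Quotient.mk_surjective _ v
    rw [Submodule.mapQ_apply, Submodule.Quotient.mk_eq_zero] at hv
    rw [Submodule.Quotient.mk_eq_zero]
    exact (h v).mp hv
  · intro v
    obtain ⟨v, rfl⟩ := Submodule.Quotient.mk_surjective _ v
    rw [← Submodule.mkQ_apply, Submodule.factor_mk]
    rw [Submodule.mkQ_apply, Submodule.Quotient.mk_eq_zero, ulr_mem_add]
    constructor
    · rintro ⟨w, hw⟩
      refine ⟨Submodule.Quotient.mk w, ?_⟩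
      rw [Submodule.mapQ_apply, Submodule.mkQ_apply, eq_comm, Submodule.Quotient.eq]
      exact hw
    · rintro ⟨w, hw⟩
      obtain ⟨w, rfl⟩ := Submodule.Quotient.mk_surjective _ w
      rw [Submodule.mapQ_apply, Submodule.mkQ_apply, eq_comm, Submodule.Quotient.eq] at hw
      exact ⟨w, hw⟩

theorem ulr_mu [IsNoetherianRing R] [IsLocalRing R] [Module.Finite R M] :
    Module.length R (M ⧸ (maximalIdeal R • ⊤ : Submodule R M)) = muGen R M := by
  have hfg : (⊤ : Submodule R M).FG := Module.Finite.fg_top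
  have h1 : muGen R M = (⊤ : Submodule R M).spanFinrank := by
    obtain ⟨s, hs, hs'⟩ := hfg.exists_span_finset_card_eq_spanFinrank
    apply le_antisymm
    · exact Nat.sInf_le ⟨s, hs, hs'⟩
    · obtain ⟨s, hs, hs'⟩ := Nat.sInf_mem
        (s := {n | ∃ s : Finset M, s.card = n ∧ Submodule.span R (s : Set M) = ⊤}) ⟨_, s, hs, hs'⟩
      have := Submodule.spanFinrank_span_le_ncard_of_finite (R := R) s.finite_toSet
      rw [hs', Set.ncard_coe_finset, hs] at this
      exact this
  let T := (⊤ : Submodule R M)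
  have h2 := IsLocalRing.spanFinrank_eq_finrank_quotient T hfg
  let e : (T ⧸ maximalIdeal R • (⊤ : Submodule R T)) ≃ₗ[R]
      M ⧸ (maximalIdeal R • ⊤ : Submodule R M) :=
    Submodule.Quotient.equiv _ _ Submodule.topEquiv (by
      change Submodule.map (Submodule.topEquiv : T ≃ₗ[R] M).toLinearMap _ = _
      rw [Submodule.map_smul'', Submodule.map_top, LinearEquiv.range])
  rw [← e.length_eq, h1, h2]
  letI : Field (R ⧸ maximalIdeal R) := Ideal.Quotient.field _
  rw [Module.length_eq_of_surjective (R := R ⧸ maximalIdeal R) (S := R)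
    Ideal.Quotient.mk_surjective]
  have : Module.Finite (R ⧸ maximalIdeal R) (T ⧸ maximalIdeal R • (⊤ : Submodule R T)) :=
    Module.Finite.of_restrictScalars_finite R _ _
  exact Module.length_eq_finrank _ _
end

theorem ulr_shift (f : ℚ → ℚ) (c : ℚ) (k : ℕ) :
    (fwdDiff 1)^[k] (fun x => f (x + c)) = fun x => ((fwdDiff 1)^[k] f) (x + c) := by
  induction k generalizing f with
  | zero => rfl
  | succ k ih =>
    rw [Function.iterate_succ_apply, Function.iterate_succ_apply, ← ih]
    congr 1
    ext x
    simp only [fwdDiff]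
    congr 2
    ring

theorem ulr_pstep (P : Polynomial ℚ) (k : ℕ) (x : ℚ) :
    (fwdDiff 1)^[k] (P - P.comp (Polynomial.X - 1)).eval x =
      (fwdDiff 1)^[k+1] P.eval (x + (-1)) := by
  have h : (P - P.comp (Polynomial.X - 1)).eval = fun x => (fwdDiff 1 P.eval) (x + (-1)) := by
    ext y
    simp only [fwdDiff, Polynomial.eval_sub, Polynomial.eval_comp, Polynomial.eval_X,
      Polynomial.eval_one]
    rw [neg_add_cancel_right, ← sub_eq_add_neg]
  rw [h, ulr_shift, Function.iterate_succ_apply]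

section
variable {R M : Type*} [CommRing R] [IsNoetherianRing R] [IsLocalRing R]
    [AddCommGroup M] [Module R M] [Module.Finite R M]

theorem ulr_main [Infinite (ResidueField R)] (e : ℕ)
    (he : Module.length R (M ⧸ (maximalIdeal R • ⊤ : Submodule R M)) = e) (t : ℕ) :
    ∀ (N : Submodule R M), ulrD t N → N ≤ maximalIdeal R • ⊤ →
    ∀ (P : Polynomial ℚ) (n0 : ℕ),
      (∀ n ≥ n0, ∃ len : ℕ, Module.length R (M ⧸ ((maximalIdeal R ^ (n+1) • ⊤) ⊔ N)) = len ∧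
        (len : ℚ) = P.eval (n : ℚ)) →
      (∀ x, (fwdDiff 1)^[t] P.eval x = (e : ℚ)) →
      ∃ s : Finset R, s.card = t ∧ (∀ x ∈ s, x ∈ maximalIdeal R ∧ ¬ ∀ u : M, x • u ∈ N) ∧
        N ⊔ Ideal.span (s : Set R) • ⊤ = maximalIdeal R • ⊤ := by
  induction t with
  | zero =>
    intro N _ hN P n0 hP hΔ
    refine ⟨∅, rfl, by simp, ?_⟩
    have hlen : ∀ n ≥ n0, Module.length R (M ⧸ ((maximalIdeal R ^ (n+1) • ⊤) ⊔ N)) = e := by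
      intro n hn
      obtain ⟨len, h1, h2⟩ := hP n hn
      have h3 := hΔ n
      simp only [Function.iterate_zero, id] at h3
      rw [h3] at h2
      rw [h1]
      exact_mod_cast h2
    have h1 := ulr_len_eq _ _ (sup_le_sup_right (Submodule.smul_mono_left
      (Ideal.pow_le_pow_right (Nat.le_succ (n0+1)))) N) e (hlen (n0+1) (by omega)) (hlen n0 le_rfl)
    have h2 : (maximalIdeal R ^ (n0+1) • ⊤ : Submodule R M) ≤ N := by
      refine Submodule.le_of_le_smul_of_le_jacobson_bot (I := maximalIdeal R)
        (IsNoetherian.noetherian _) (IsLocalRing.maximalIdeal_le_jacobson ⊥) ?_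
      rw [← mul_smul, ← pow_succ', sup_comm]
      rw [← Nat.succ_eq_add_one (n0+1), h1]
      exact le_sup_left
    have h3 := hlen n0 le_rfl
    rw [sup_eq_right.mpr h2] at h3
    have h4 := ulr_len_eq _ _ hN e h3 he
    simp [h4]
  | succ t ih =>
    intro N hD hN P n0 hP hΔ
    obtain ⟨x, hxm, hxr, c, hc⟩ := ulr_superficial2 N (ulr_D_soc hD)
    have hD' := ulr_exchange t N hD x hxm hxr
    have hxtop : ∀ u : M, x • u ∈ maximalIdeal R • (⊤ : Submodule R M) := fun u =>
      Submodule.smul_mem_smul hxm trivial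
    have hN' : ulrAdd N x ≤ maximalIdeal R • ⊤ := by
      intro u hu
      rw [ulr_mem_add] at hu
      obtain ⟨w, hw⟩ := hu
      have := Submodule.add_mem _ (hN hw) (hxtop w)
      simpa using this
    obtain ⟨s, hs, hs1, hs2⟩ := ih (ulrAdd N x) hD' hN' (P - P.comp (Polynomial.X - 1))
      (n0 + c + 1) (by
        intro n hn
        obtain ⟨k, rfl⟩ : ∃ k, n = k + 1 := ⟨n - 1, by omega⟩
        obtain ⟨l1, h1, h1'⟩ := hP (k+1) (by omega)
        obtain ⟨l2, h2, h2'⟩ := hP k (by omega)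
        have h3 := ulr_len_reg ((maximalIdeal R ^ (k+1) • ⊤) ⊔ N)
          ((maximalIdeal R ^ (k+1+1) • ⊤) ⊔ N) x (by
            intro u
            refine ⟨hc (k+1) (by omega) u, fun hu => ?_⟩
            obtain ⟨a, ha, b, hb, rfl⟩ := Submodule.mem_sup.mp hu
            rw [smul_add]
            refine Submodule.add_mem_sup ?_ (N.smul_mem x hb)
            rw [pow_succ', mul_smul]
            exact Submodule.smul_mem_smul hxm ha)
        have h4 : ulrAdd ((maximalIdeal R ^ (k+1+1) • ⊤) ⊔ N) x =
          (maximalIdeal R ^ (k+1+1) • ⊤) ⊔ ulrAdd N x := by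
          unfold ulrAdd; rw [sup_assoc]
        rw [h4, h1, h2] at h3
        obtain ⟨l3, h5⟩ : ∃ l3 : ℕ, Module.length R
          (M ⧸ ((maximalIdeal R ^ (k+1+1) • ⊤) ⊔ ulrAdd N x)) = l3 := by
          apply ENat.ne_top_iff_exists.mp ?_ |>.imp fun _ h => h.symm
          intro h
          rw [h] at h3
          simp at h3
        refine ⟨l3, h5, ?_⟩
        rw [h5] at h3
        have h6 : l1 = l2 + l3 := by exact_mod_cast h3
        simp only [Polynomial.eval_sub, Polynomial.eval_comp, Polynomial.eval_X,
          Polynomial.eval_one]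
        rw [← h1', h6]
        push_cast
        rw [add_sub_cancel_right, ← h2']
        ring) (by
        intro y
        rw [ulr_pstep, hΔ])
    classical
    have hxadd : ∀ u, x • u ∈ ulrAdd N x := fun u => by
      rw [ulr_mem_add]; exact ⟨u, by simp⟩
    refine ⟨insert x s, ?_, ?_, ?_⟩
    · rw [Finset.card_insert_of_notMem, hs]
      intro h
      exact (hs1 x h).2 hxadd
    · intro y hy
      rcases Finset.mem_insert.mp hy with rfl | hy
      · refine ⟨hxm, fun h => ulr_D_ne_top hD ?_⟩
        rw [eq_top_iff]
        exact fun u _ => hxr u (h u)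
      · exact ⟨(hs1 y hy).1, fun h => (hs1 y hy).2 fun u => ulr_le_add N x (h u)⟩
    · rw [← hs2, Finset.coe_insert, Ideal.span_insert, Submodule.sup_smul, ← sup_assoc]
      rfl

end
/-- If `M` is Ulrich of dimension `t ≥ 2` over a local ring with infinite residue field,
then there is a parameter ideal `Q` with `𝔪M = QM`, and for it `f⁰_Q(M) = ℓ(M/QM)`. -/
theorem statement8 {R M : Type*} [CommRing R] [IsNoetherianRing R] [IsLocalRing R]
    [AddCommGroup M] [Module R M] [Module.Finite R M]
    [Infinite (ResidueField R)]
    (t : ℕ) (ht : 2 ≤ t)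
    (hdim : ringKrullDim (R ⧸ Module.annihilator R M) = t)
    (hCM : depthM R M = t)
    (P : Polynomial ℚ) (hPdeg : P.natDegree = t)
    (hP : ∃ N : ℕ, ∀ n ≥ N, ∃ len : ℕ,
      moduleLength R (M ⧸ ((maximalIdeal R) ^ (n + 1) • ⊤ : Submodule R M)) = len ∧
        (len : ℚ) = P.eval (n : ℚ))
    (hUlrich : (muGen R M : ℚ) = (t.factorial : ℚ) * P.leadingCoeff) :
    ∃ Q : Ideal R, IsParameterIdeal R M t Q ∧
      (maximalIdeal R) • (⊤ : Submodule R M) = Q • ⊤ ∧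
      ∀ G : Polynomial ℚ, G.natDegree = t - 1 →
        (∃ N : ℕ, ∀ n ≥ N, ∃ len : ℕ,
          moduleLength R ↥(Submodule.map (Q ^ (n + 1) • ⊤ : Submodule R M).mkQ
            ((Q ^ (n + 1) • ⊤ : Submodule R M).colonBy (maximalIdeal R))) = len ∧
            (len : ℚ) = G.eval (n : ℚ)) →
        ∀ l : ℕ, moduleLength R (M ⧸ (Q • ⊤ : Submodule R M)) = l →
          ((t - 1).factorial : ℚ) * G.leadingCoeff = (l : ℚ) := by
  have hD : ulrD t (⊥ : Submodule R M) := by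
    have hmem : t ∈ {n | ∃ rs : List R, rs.length = n ∧ (∀ r ∈ rs, r ∈ maximalIdeal R) ∧
        RingTheory.Sequence.IsRegular M rs} := by
      have hb : BddAbove {n | ∃ rs : List R, rs.length = n ∧ (∀ r ∈ rs, r ∈ maximalIdeal R) ∧
          RingTheory.Sequence.IsRegular M rs} := by
        by_contra hb
        have h0 := Nat.sSup_of_not_bddAbove hb
        unfold depthM at hCM
        omega
      have hne : {n | ∃ rs : List R, rs.length = n ∧ (∀ r ∈ rs, r ∈ maximalIdeal R) ∧
          RingTheory.Sequence.IsRegular M rs}.Nonempty := by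
        by_contra hne
        rw [Set.not_nonempty_iff_eq_empty] at hne
        unfold depthM at hCM
        rw [hne] at hCM
        simp at hCM
        omega
      have := Nat.sSup_mem hne hb
      unfold depthM at hCM
      rwa [hCM] at this
    obtain ⟨rs, h1, h2, h3⟩ := hmem
    rw [← h1]
    exact ulr_D_of_regular rs h2 h3
  have hΔ : ∀ x, (fwdDiff 1)^[t] P.eval x = (muGen R M : ℚ) := by
    intro x
    have := Polynomial.fwdDiff_iter_degree_eq_factorial P
    rw [hPdeg] at this
    rw [this, hUlrich]
    simp [mul_comm]
  obtain ⟨n0, hP⟩ := hP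
  simp only [ulr_len] at hP ⊢
  obtain ⟨s, hs, hs1, hs2⟩ := ulr_main (R := R) (M := M) (muGen R M) ulr_mu t ⊥ hD bot_le P n0
    (fun n hn => by rw [sup_bot_eq]; exact hP n hn) hΔ
  rw [bot_sup_eq] at hs2
  set Q := Ideal.span (s : Set R) with hQ
  have hpow : ∀ n, (Q ^ n • ⊤ : Submodule R M) = maximalIdeal R ^ n • ⊤ := by
    intro n
    induction n with
    | zero => simp
    | succ n ih =>
      rw [pow_succ', mul_smul, ih, pow_succ, mul_smul, ← hs2, ← mul_smul, ← mul_smul, mul_comm]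
  refine ⟨Q, ⟨Ideal.span_le.mpr fun x hx => (hs1 x hx).1, s, hs, rfl, ?_⟩, hs2.symm, ?_⟩
  · rw [ulr_len, hs2, ulr_mu]
    exact ENat.natCast_ne_top _
  intro G hG hGe l hl
  rw [hs2, ulr_mu] at hl
  have hl' : muGen R M = l := by exact_mod_cast hl
  obtain ⟨n1, hGe⟩ := hGe
  obtain ⟨k, rfl⟩ : ∃ k, t = k + 1 := ⟨t - 1, by omega⟩
  obtain ⟨x, hxm, hxr, c, hc⟩ := ulr_superficial2 (⊥ : Submodule R M) (ulr_D_soc hD)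
  have hev : ∀ n, n0 + n1 + c + 1 ≤ n →
      G.eval (n : ℚ) = (P - P.comp (Polynomial.X - 1)).eval (n : ℚ) := by
    intro n hn
    obtain ⟨j, rfl⟩ : ∃ j, n = j + 1 := ⟨n - 1, by omega⟩
    obtain ⟨l1, h1, h1'⟩ := hP (j+1) (by omega)
    obtain ⟨l2, h2, h2'⟩ := hP j (by omega)
    obtain ⟨l3, h3, h3'⟩ := hGe (j+1) (by omega)
    have hcol : (Q ^ (j + 1 + 1) • ⊤ : Submodule R M).colonBy (maximalIdeal R) =
        maximalIdeal R ^ (j + 1) • ⊤ := by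
      rw [hpow]
      apply le_antisymm
      · intro u hu
        have := hc (j+1) (by omega) u (by rw [sup_bot_eq]; exact hu x hxm)
        rwa [sup_bot_eq] at this
      · intro u hu r hr
        rw [pow_succ', mul_smul]
        exact Submodule.smul_mem_smul hr hu
    rw [hcol, hpow] at h3
    have h4 := ulr_len_le (maximalIdeal R ^ (j+1+1) • ⊤ : Submodule R M)
      (maximalIdeal R ^ (j+1) • ⊤) (Submodule.smul_mono_left
      (Ideal.pow_le_pow_right (Nat.le_succ _)))
    rw [h1, h2, h3] at h4
    have h5 : l1 = l3 + l2 := by exact_mod_cast h4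
    simp only [Polynomial.eval_sub, Polynomial.eval_comp, Polynomial.eval_X,
      Polynomial.eval_one]
    rw [← h1', ← h3', h5]
    push_cast
    rw [add_sub_cancel_right, ← h2']
    ring
  have hGP : G = P - P.comp (Polynomial.X - 1) := by
    apply Polynomial.eq_of_infinite_eval_eq
    refine Set.Infinite.mono (s := (fun n : ℕ => (n : ℚ)) '' Set.Ici (n0 + n1 + c + 1)) ?_ ?_
    · rintro _ ⟨n, hn, rfl⟩
      exact hev n hn
    · exact (Set.Ici_infinite _).image Nat.cast_injective.injOn
  have h1 := congrFun (Polynomial.fwdDiff_iter_degree_eq_factorial G) 0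
  rw [hG, Nat.add_sub_cancel] at h1
  have h2 := ulr_pstep P k 0
  rw [← hGP, h1, hΔ, hl'] at h2
  rw [Nat.add_sub_cancel, ← h2]
  simp [mul_comm]
end
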